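/- Let q > 1/2, p = 1/q, and let f be a fuzzy q-almost quadratic function from a fuzzy normed space (X, N) into a fuzzy Banach space (Y, N′), and let Q : X → Y be the quadratic function given by the fuzzy limit Q(x) = lim f(2^n x)/4^n. If for each x ∈ X the map t ↦ N′ (Q(x) − f(x)) t is right continuous at each point of (0, ∞), then N′ (Q(x) − f(x)) t ≥ N x (((2^(2−p) − 1)/2)^q · t^q) for all x ∈ X and all t > 0. -/

import Mathlib

/-!
Doubling the argument of an almost quadratic `f` multiplies its value by `4` up to a fuzzy error of
size `2 * s` at level `N x (s ^ q)`. Since `(2 ^ (1 / q)) ^ q = 2`, replacing `x` by `2 ^ n • x` and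
`s` by `(2 ^ (1 / q)) ^ n * s` keeps the level, so the increments of `f (2 ^ n • x) / 4 ^ n` are
bounded, all at that one level, by a geometric sequence of ratio `2 ^ (1 / q) / 4`, whose sum is
`s / ((4 - 2 ^ (1 / q)) / 2)`. Passing to the limit costs an arbitrarily small enlargement of this
sum. The constant `(2 ^ (2 - p) - 1) / 2` lies strictly below `(4 - 2 ^ p) / 2`, because
`(2 ^ p - 1) * (2 ^ (2 - p) - 1) > 0`, and this gap pays for the enlargement.
-/

open Filter Finset

/-- A fuzzy norm on a real vector space, following Bag–Samanta. -/
structure IsFuzzyNorm {X : Type*} [AddCommGroup X] [Module ℝ X] (N : X → ℝ → ℝ) : Prop where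
  nonneg : ∀ (x : X) (t : ℝ), 0 ≤ N x t
  le_one : ∀ (x : X) (t : ℝ), N x t ≤ 1
  eq_zero_of_nonpos : ∀ (x : X) (c : ℝ), c ≤ 0 → N x c = 0
  eq_zero_iff : ∀ x : X, x = 0 ↔ ∀ c : ℝ, 0 < c → N x c = 1
  smul_eq : ∀ (c : ℝ) (x : X) (t : ℝ), c ≠ 0 → N (c • x) t = N x (t / |c|)
  min_le_add : ∀ (x y : X) (s t : ℝ), min (N x s) (N y t) ≤ N (x + y) (s + t)
  mono : ∀ x : X, Monotone (N x)
  tendsto_one : ∀ x : X, Tendsto (N x) atTop (nhds 1)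

/-- Convergence of a sequence to a fuzzy limit in a fuzzy normed space. -/
def FuzzyTendsto {X : Type*} [AddCommGroup X] [Module ℝ X] (N : X → ℝ → ℝ)
    (xs : ℕ → X) (x : X) : Prop :=
  ∀ t : ℝ, 0 < t → Tendsto (fun n => N (xs n - x) t) atTop (nhds 1)

/-- Cauchy sequences in a fuzzy normed space. -/
def FuzzyCauchy {X : Type*} [AddCommGroup X] [Module ℝ X] (N : X → ℝ → ℝ)
    (xs : ℕ → X) : Prop :=
  ∀ ε : ℝ, 0 < ε → ∀ t : ℝ, 0 < t → ∃ n₀ : ℕ, ∀ n ≥ n₀, ∀ p : ℕ, 0 < p →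
    1 - ε < N (xs (n + p) - xs n) t

/-- A fuzzy normed space is complete (a fuzzy Banach space) if every Cauchy
sequence converges. -/
def IsFuzzyComplete {X : Type*} [AddCommGroup X] [Module ℝ X] (N : X → ℝ → ℝ) : Prop :=
  ∀ xs : ℕ → X, FuzzyCauchy N xs → ∃ x : X, FuzzyTendsto N xs x

/-- Quadratic functional equation. -/
def IsQuadratic {X Y : Type*} [AddCommGroup X] [AddCommGroup Y] (Q : X → Y) : Prop :=
  ∀ x y : X, Q (x + y) + Q (x - y) = 2 • Q x + 2 • Q y

/-- Additive functional equation. -/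
def IsAdditive {X Y : Type*} [AddCommGroup X] [AddCommGroup Y] (T : X → Y) : Prop :=
  ∀ x y : X, T (x + y) = T x + T y

namespace IsFuzzyNorm

variable {X : Type*} [AddCommGroup X] [Module ℝ X] {N : X → ℝ → ℝ}

theorem zero_eq_one (hN : IsFuzzyNorm N) {t : ℝ} (ht : 0 < t) : N 0 t = 1 :=
  (hN.eq_zero_iff 0).1 rfl t ht

theorem smul_mul_eq (hN : IsFuzzyNorm N) {c : ℝ} (hc : 0 < c) (x : X) (t : ℝ) :
    N (c • x) (c * t) = N x t := by
  rw [hN.smul_eq c x _ hc.ne', abs_of_pos hc, mul_div_cancel_left₀ t hc.ne']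

theorem neg_eq (hN : IsFuzzyNorm N) (x : X) (t : ℝ) : N (-x) t = N x t := by
  simpa using hN.smul_eq (-1) x t (by norm_num)

theorem sub_rev (hN : IsFuzzyNorm N) (x y : X) (t : ℝ) : N (x - y) t = N (y - x) t := by
  rw [← hN.neg_eq, neg_sub]

theorem min_le_sub (hN : IsFuzzyNorm N) (x y z : X) (s t : ℝ) :
    min (N (x - y) s) (N (y - z) t) ≤ N (x - z) (s + t) := by
  simpa using hN.min_le_add (x - y) (y - z) s t

theorem le_sub_sum_range (hN : IsFuzzyNorm N) {a : ℕ → X} {d : ℕ → ℝ} {M ε : ℝ}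
    (hε : 0 < ε) (ha : ∀ n, M ≤ N (a (n + 1) - a n) (d n)) (n : ℕ) :
    M ≤ N (a n - a 0) (∑ i ∈ range n, d i + ε) := by
  induction n with
  | zero =>
    -- This case is the reason for the slack `ε`: the fuzzy norm of `0` is `0`, not `1`, at `0`.
    simpa [hN.zero_eq_one hε] using (ha 0).trans (hN.le_one _ _)
  | succ n ih =>
    rw [sum_range_succ_comm, add_assoc]
    exact (le_min (ha n) ih).trans (hN.min_le_sub _ _ _ _ _)

theorem le_sub_of_fuzzyTendsto (hN : IsFuzzyNorm N) {a : ℕ → X} {y z : X} {M s t : ℝ}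
    (hay : FuzzyTendsto N a y) (hst : s < t) (ha : ∀ n, M ≤ N (a n - z) s) :
    M ≤ N (y - z) t := by
  have hM : M ≤ 1 := (ha 0).trans (hN.le_one _ _)
  have hlim : Tendsto (fun n => min (N (a n - y) (t - s)) M) atTop (nhds M) := by
    simpa [hM] using (hay (t - s) (sub_pos.2 hst)).min (tendsto_const_nhds (x := M))
  refine le_of_tendsto' hlim fun n => ?_
  calc min (N (a n - y) (t - s)) M
      ≤ min (N (y - a n) (t - s)) (N (a n - z) s) :=
        min_le_min (hN.sub_rev _ _ _).le (ha n)
    _ ≤ N (y - z) t := by simpa using hN.min_le_sub y (a n) z (t - s) s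

theorem le_sub_of_sum_range_le (hN : IsFuzzyNorm N) {a : ℕ → X} {y : X} {d : ℕ → ℝ} {M S t : ℝ}
    (hay : FuzzyTendsto N a y) (ha : ∀ n, M ≤ N (a (n + 1) - a n) (d n))
    (hd : ∀ n, ∑ i ∈ range n, d i ≤ S) (hSt : S < t) :
    M ≤ N (y - a 0) t := by
  obtain ⟨s, hSs, hst⟩ := exists_between hSt
  refine hN.le_sub_of_fuzzyTendsto hay hst fun n => ?_
  refine (hN.le_sub_sum_range (sub_pos.2 hSs) ha n).trans (hN.mono _ ?_)
  linarith [hd n]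

end IsFuzzyNorm

/-- Fuzzy `q`-almost quadratic maps: the quadratic functional equation holds up to an error
controlled by the fuzzy norms of the two arguments at the powers `t ^ q` and `s ^ q`. -/
def IsFuzzyAlmostQuadratic {X Y : Type*} [AddCommGroup X] [AddCommGroup Y]
    (N : X → ℝ → ℝ) (N' : Y → ℝ → ℝ) (q : ℝ) (f : X → Y) : Prop :=
  ∀ x y : X, ∀ s t : ℝ, 0 ≤ s → 0 ≤ t →
    min (N x (t ^ q)) (N y (s ^ q)) ≤
      N' (f (x + y) + f (x - y) - 2 • f x - 2 • f y) (t + s)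

section Hyers

variable {X Y : Type*} [AddCommGroup X] [Module ℝ X] [AddCommGroup Y] [Module ℝ Y]

/-- The Hyers sequence `f (2 ^ n • x) / 4 ^ n`, whose limit is the quadratic map approximating
`f`. -/
noncomputable def hyersSeq (f : X → Y) (x : X) (n : ℕ) : Y :=
  ((4 : ℝ) ^ n)⁻¹ • f (((2 : ℝ) ^ n) • x)

@[simp]
theorem hyersSeq_zero (f : X → Y) (x : X) : hyersSeq f x 0 = f x := by
  simp [hyersSeq]

theorem hyersSeq_succ_sub (f : X → Y) (x : X) (n : ℕ) :
    hyersSeq f x (n + 1) - hyersSeq f x n =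
      ((4 : ℝ) ^ (n + 1))⁻¹ •
        (f ((2 : ℝ) • (2 : ℝ) ^ n • x) - (4 : ℝ) • f ((2 : ℝ) ^ n • x)) := by
  have hfour : ((4 : ℝ) ^ (n + 1))⁻¹ * 4 = ((4 : ℝ) ^ n)⁻¹ := by
    rw [pow_succ]
    field_simp
  rw [smul_sub, smul_smul, smul_smul, hfour, ← pow_succ', hyersSeq, hyersSeq]

namespace IsFuzzyAlmostQuadratic

variable {N : X → ℝ → ℝ} {N' : Y → ℝ → ℝ} {q : ℝ} {f : X → Y}

theorem map_zero (hf : IsFuzzyAlmostQuadratic N N' q f) (hN : IsFuzzyNorm N)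
    (hN' : IsFuzzyNorm N') : f 0 = 0 := by
  refine (hN'.eq_zero_iff _).2 fun c hc => (hN'.le_one _ _).antisymm ?_
  have hdefect : f (0 + 0) + f (0 - 0) - 2 • f 0 - 2 • f 0 = -((2 : ℝ) • f 0) := by
    rw [add_zero, sub_zero]
    module
  calc (1 : ℝ) = min (N 0 (c ^ q)) (N 0 (c ^ q)) := by
        rw [min_self, hN.zero_eq_one (Real.rpow_pos_of_pos hc q)]
    _ ≤ N' (-((2 : ℝ) • f 0)) (c + c) := hdefect ▸ hf 0 0 c c hc.le hc.le
    _ = N' (f 0) c := by rw [hN'.neg_eq, ← two_mul, hN'.smul_mul_eq two_pos]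

theorem le_map_two_smul_sub (hf : IsFuzzyAlmostQuadratic N N' q f) (hN : IsFuzzyNorm N)
    (hN' : IsFuzzyNorm N') (x : X) {s : ℝ} (hs : 0 ≤ s) :
    N x (s ^ q) ≤ N' (f ((2 : ℝ) • x) - (4 : ℝ) • f x) (2 * s) := by
  have hdefect : f (x + x) + f (x - x) - 2 • f x - 2 • f x =
      f ((2 : ℝ) • x) - (4 : ℝ) • f x := by
    rw [sub_self, hf.map_zero hN hN', ← two_smul ℝ x]
    module
  simpa only [min_self, hdefect, ← two_mul] using hf x x s s hs hs

theorem le_hyersSeq_succ_sub (hf : IsFuzzyAlmostQuadratic N N' q f) (hN : IsFuzzyNorm N)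
    (hN' : IsFuzzyNorm N') (hq : q ≠ 0) (x : X) {s : ℝ} (hs : 0 ≤ s) (n : ℕ) :
    N x (s ^ q) ≤ N' (hyersSeq f x (n + 1) - hyersSeq f x n)
      (((2 : ℝ) ^ (1 / q) / 4) ^ n * (s / 2)) := by
  set b : ℝ := (2 : ℝ) ^ (1 / q) with hb_def
  have hb : 0 ≤ b := by positivity
  have hscale : (b ^ n * s) ^ q = 2 ^ n * s ^ q := by
    rw [Real.mul_rpow (by positivity) hs, ← Real.rpow_pow_comm hb, hb_def, one_div,
      Real.rpow_inv_rpow zero_le_two hq]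
  have hradius : (b / 4) ^ n * (s / 2) = ((4 : ℝ) ^ (n + 1))⁻¹ * (2 * (b ^ n * s)) := by
    rw [div_pow, pow_succ]
    field_simp
    norm_num
  calc N x (s ^ q) = N ((2 : ℝ) ^ n • x) ((b ^ n * s) ^ q) := by
        rw [hscale, hN.smul_mul_eq (by positivity)]
    _ ≤ N' (f ((2 : ℝ) • (2 : ℝ) ^ n • x) - (4 : ℝ) • f ((2 : ℝ) ^ n • x)) (2 * (b ^ n * s)) :=
        hf.le_map_two_smul_sub hN hN' _ (by positivity)
    _ = N' (hyersSeq f x (n + 1) - hyersSeq f x n) ((b / 4) ^ n * (s / 2)) := by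
        rw [hyersSeq_succ_sub, hradius, hN'.smul_mul_eq (by positivity)]

end IsFuzzyAlmostQuadratic

theorem fuzzy_stability_quadratic_better_bound_general {N : X → ℝ → ℝ} {N' : Y → ℝ → ℝ}
    (hN : IsFuzzyNorm N) (hN' : IsFuzzyNorm N') {q : ℝ} (hq : q ≠ 0) {f : X → Y}
    (hf : IsFuzzyAlmostQuadratic N N' q f) {x : X} {y : Y}
    (hy : FuzzyTendsto N' (hyersSeq f x) y) {c t : ℝ} (hc₀ : 0 ≤ c)
    (hc : c < (4 - (2 : ℝ) ^ (1 / q)) / 2) (ht : 0 < t) :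
    N x (c ^ q * t ^ q) ≤ N' (y - f x) t := by
  rw [← Real.mul_rpow hc₀ ht.le, ← hyersSeq_zero f x]
  have hstep := hf.le_hyersSeq_succ_sub hN hN' hq x (mul_nonneg hc₀ ht.le)
  set b : ℝ := (2 : ℝ) ^ (1 / q)
  have hr : b / 4 < 1 := by linarith
  have hsum (n : ℕ) : ∑ i ∈ range n, (b / 4) ^ i * (c * t / 2) ≤
      (1 - b / 4)⁻¹ * (c * t / 2) :=
    sum_le_hasSum _ (fun i _ => by positivity)
      ((hasSum_geometric_of_lt_one (by positivity) hr).mul_right _)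
  have hlt : (1 - b / 4)⁻¹ * (c * t / 2) < t := by
    rw [inv_mul_lt_iff₀ (sub_pos.2 hr)]
    linarith [mul_lt_mul_of_pos_right hc ht]
  exact hN'.le_sub_of_sum_range_le hy hstep hsum hlt

end Hyers

theorem rpow_add_rpow_lt_one_add_rpow_add {x r s : ℝ} (hx : 1 < x) (hr : 0 < r) (hs : 0 < s) :
    x ^ r + x ^ s < 1 + x ^ (r + s) := by
  rw [Real.rpow_add (one_pos.trans hx)]
  linarith [mul_pos (sub_pos.2 (Real.one_lt_rpow hx hr)) (sub_pos.2 (Real.one_lt_rpow hx hs))]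

theorem two_rpow_two_sub_sub_one_div_two_mem_Ico {p : ℝ} (hp₀ : 0 < p) (hp₂ : p < 2) :
    ((2 : ℝ) ^ (2 - p) - 1) / 2 ∈ Set.Ico 0 ((4 - (2 : ℝ) ^ p) / 2) := by
  have hlt := rpow_add_rpow_lt_one_add_rpow_add one_lt_two hp₀ (sub_pos.2 hp₂)
  have hone : (1 : ℝ) < 2 ^ (2 - p) := Real.one_lt_rpow one_lt_two (sub_pos.2 hp₂)
  rw [add_sub_cancel, Real.rpow_two] at hlt
  constructor <;> linarith

/-- Remark 2.2: if `N' (Q x - f x)` is right continuous on `(0, ∞)`, then one gets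
the better fuzzy approximation with constant `((2^(2-p) - 1)/2)^q`. -/
theorem fuzzy_stability_quadratic_better_bound
    {X Y : Type*} [AddCommGroup X] [Module ℝ X] [AddCommGroup Y] [Module ℝ Y]
    (N : X → ℝ → ℝ) (N' : Y → ℝ → ℝ)
    (hN : IsFuzzyNorm N) (hN' : IsFuzzyNorm N') (hYcomplete : IsFuzzyComplete N')
    (q p : ℝ) (hq : 1 / 2 < q) (hp : p = 1 / q)
    (f Q : X → Y)
    (hf : ∀ x y : X, ∀ s t : ℝ, 0 ≤ s → 0 ≤ t →
      min (N x (t ^ q)) (N y (s ^ q)) ≤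
        N' (f (x + y) + f (x - y) - 2 • f x - 2 • f y) (t + s))
    (hQquad : IsQuadratic Q)
    (hQlim : ∀ x : X, FuzzyTendsto N' (fun n : ℕ => ((4 : ℝ) ^ n)⁻¹ • f (((2 : ℝ) ^ n) • x)) (Q x))
    (hrc : ∀ x : X, ∀ t : ℝ, 0 < t →
      ContinuousWithinAt (fun s : ℝ => N' (Q x - f x) s) (Set.Ici t) t) :
    ∀ x : X, ∀ t : ℝ, 0 < t →
      N x ((((2 : ℝ) ^ ((2 : ℝ) - p) - 1) / 2) ^ q * t ^ q) ≤ N' (Q x - f x) t := by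
  intro x t ht
  subst hp
  have hq₀ : 0 < q := one_half_pos.trans hq
  have hp₂ : 1 / q < 2 := (one_div_lt hq₀ two_pos).2 hq
  obtain ⟨hc₀, hc⟩ := two_rpow_two_sub_sub_one_div_two_mem_Ico (one_div_pos.2 hq₀) hp₂
  exact fuzzy_stability_quadratic_better_bound_general hN hN' hq₀.ne' hf (hQlim x) hc₀ hc ht
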